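/- arXiv:2509.06416 — 10 statements merged into one kernel-verified Lean document; each statement's English description precedes it below -/
import Mathlib

section
/- Let (X, f_{1,∞}) be an NDS and n ∈ ℕ. Then f_{1,∞} is multi-transitive if and only if its n-th iterate f_{1,∞}^{[n]} is multi-transitive. -/
open Set Filter

section NDSDefs

variable {X : Type*}

/-- `nComp f i n` is the composition `f (i+n-1) ∘ ⋯ ∘ f (i+1) ∘ f i`.
Here `f` is the 0-indexed sequence of maps of the NDS (so `f 0` is the paper's `f₁`),
and `nComp f 0 n` is the paper's `f₁ⁿ`. -/
def nComp (f : ℕ → X → X) (i : ℕ) : ℕ → X → X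
  | 0 => id
  | n + 1 => f (i + n) ∘ nComp f i n

/-- The `k`-th iterate NDS `f^{[k]}`: its `n`-th map (0-indexed) is `f_{kn+1}^{k}`
in the paper's notation, i.e. the composition of `k` maps of `f` starting at index `k*n`. -/
def iterNDS (f : ℕ → X → X) (k : ℕ) : ℕ → X → X :=
  fun n => nComp f (k * n) k

/-- The product NDS `f^{[a]} = f^{[a 0]} × ⋯ × f^{[a (r-1)]}` on `Fin r → X`
for a vector `a : Fin r → ℕ`. -/
def vecIter (f : ℕ → X → X) {r : ℕ} (a : Fin r → ℕ) : ℕ → (Fin r → X) → Fin r → X :=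
  fun n x i => iterNDS f (a i) n (x i)

section Topo

variable [TopologicalSpace X]

/-- Topological transitivity of an NDS. -/
def NDSTransitive (f : ℕ → X → X) : Prop :=
  ∀ U V : Set X, IsOpen U → U.Nonempty → IsOpen V → V.Nonempty →
    ∃ n : ℕ, 1 ≤ n ∧ (nComp f 0 n '' U ∩ V).Nonempty

/-- Multi-transitivity of an NDS. -/
def MultiTransitive (f : ℕ → X → X) : Prop :=
  ∀ m : ℕ, 1 ≤ m → ∀ U V : Fin m → Set X,
    (∀ i, IsOpen (U i)) → (∀ i, (U i).Nonempty) →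
    (∀ i, IsOpen (V i)) → (∀ i, (V i).Nonempty) →
    ∃ l : ℕ, 1 ≤ l ∧ ∀ i : Fin m, (nComp f 0 ((i.1 + 1) * l) '' U i ∩ V i).Nonempty

/-- Multi-transitivity of an NDS with respect to a vector `a`. -/
def MultiTransWrt (f : ℕ → X → X) {p : ℕ} (a : Fin p → ℕ) : Prop :=
  ∀ U V : Fin p → Set X,
    (∀ i, IsOpen (U i)) → (∀ i, (U i).Nonempty) →
    (∀ i, IsOpen (V i)) → (∀ i, (V i).Nonempty) →
    ∃ l : ℕ, 1 ≤ l ∧ ∀ i : Fin p, (nComp f 0 (a i * l) '' U i ∩ V i).Nonempty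

/-- Strong multi-transitivity of an NDS: multi-transitivity with respect to every
vector of positive integers. -/
def StronglyMultiTransitive (f : ℕ → X → X) : Prop :=
  ∀ p : ℕ, 1 ≤ p → ∀ a : Fin p → ℕ, (∀ i, 1 ≤ a i) → MultiTransWrt f a

/-- Weak mixing of order `n` of an NDS. -/
def WeaklyMixingOfOrder (f : ℕ → X → X) (n : ℕ) : Prop :=
  ∀ U V : Fin n → Set X,
    (∀ i, IsOpen (U i)) → (∀ i, (U i).Nonempty) →
    (∀ i, IsOpen (V i)) → (∀ i, (V i).Nonempty) →
    ∃ m : ℕ, 1 ≤ m ∧ ∀ i : Fin n, (nComp f 0 m '' U i ∩ V i).Nonempty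

/-- Weak mixing of all orders of an NDS. -/
def WeaklyMixingAllOrders (f : ℕ → X → X) : Prop :=
  ∀ n : ℕ, 2 ≤ n → WeaklyMixingOfOrder f n

/-- Mild mixing of an NDS: the product with any transitive NDS (on a compact
metric space, with continuous maps) is transitive. -/
def MildlyMixing (f : ℕ → X → X) : Prop :=
  ∀ (Y : Type) [MetricSpace Y] [CompactSpace Y] (g : ℕ → Y → Y),
    (∀ n, Continuous (g n)) → NDSTransitive g →
      NDSTransitive (fun n (p : X × Y) => (f n p.1, g n p.2))

/-- Δ-transitivity of an NDS. -/
def DeltaTransitive (f : ℕ → X → X) : Prop :=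
  ∀ m : ℕ, 1 ≤ m → ∃ Y : Set X, Dense Y ∧ IsGδ Y ∧
    ∀ x ∈ Y, Dense {y : Fin m → X | ∃ n : ℕ, 1 ≤ n ∧ y = fun i => nComp f 0 ((i.1 + 1) * n) x}

/-- Δ-mixing of an NDS. -/
def DeltaMixing (f : ℕ → X → X) : Prop :=
  ∀ m : ℕ, 1 ≤ m → ∀ A : Set ℕ, A.Infinite → 0 ∉ A →
    ∃ Y : Set X, Dense Y ∧ IsGδ Y ∧
      ∀ x ∈ Y, Dense {y : Fin m → X | ∃ n ∈ A, y = fun i => nComp f 0 ((i.1 + 1) * n) x}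

/-- The set `N_{f_{1,∞}}(U,V)` of (positive) hitting times. -/
def hitTimes (f : ℕ → X → X) (U V : Set X) : Set ℕ :=
  {n : ℕ | 1 ≤ n ∧ (nComp f 0 n '' U ∩ V).Nonempty}

/-- A set of positive integers is syndetic if it has bounded gaps. -/
def Syndetic (A : Set ℕ) : Prop :=
  ∃ M : ℕ, ∀ i : ℕ, 1 ≤ i → ∃ j ∈ A, i ≤ j ∧ j ≤ i + M

/-- A set of positive integers is thick if it contains arbitrarily long runs. -/
def ThickSet (A : Set ℕ) : Prop :=
  ∀ p : ℕ, ∃ n : ℕ, 1 ≤ n ∧ ∀ j ≤ p, n + j ∈ A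

/-- A set of positive integers is thickly syndetic. -/
def ThicklySyndetic (A : Set ℕ) : Prop :=
  ∀ l : ℕ, Syndetic {m : ℕ | ∀ j ≤ l, m + j ∈ A}

/-- Thick transitivity of an NDS. -/
def ThicklyTransitive (f : ℕ → X → X) : Prop :=
  ∀ U V : Set X, IsOpen U → U.Nonempty → IsOpen V → V.Nonempty →
    ThickSet (hitTimes f U V)

/-- Thickly syndetic transitivity of an NDS. -/
def ThicklySyndeticallyTransitive (f : ℕ → X → X) : Prop :=
  ∀ U V : Set X, IsOpen U → U.Nonempty → IsOpen V → V.Nonempty →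
    ThicklySyndetic (hitTimes f U V)

/-- Total transitivity of an NDS: every iterate `f^{[n]}` is transitive. -/
def TotallyTransitive (f : ℕ → X → X) : Prop :=
  ∀ n : ℕ, 1 ≤ n → NDSTransitive (iterNDS f n)

/-- An NDS is feeble open if each map sends nonempty open sets to sets with
nonempty interior. -/
def FeebleOpen (f : ℕ → X → X) : Prop :=
  ∀ i : ℕ, ∀ U : Set X, IsOpen U → U.Nonempty → (interior (f i '' U)).Nonempty

/-- Strong multi-transitivity of an autonomous system `(X, g)`. -/
def ADSStronglyMultiTransitive (g : X → X) : Prop :=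
  ∀ m : ℕ, 1 ≤ m → ∀ a : Fin m → ℕ, (∀ j, 1 ≤ a j) →
    ∀ U V : Fin m → Set X,
      (∀ j, IsOpen (U j)) → (∀ j, (U j).Nonempty) →
      (∀ j, IsOpen (V j)) → (∀ j, (V j).Nonempty) →
      ∃ l : ℕ, 1 ≤ l ∧ ∀ j : Fin m, (g^[a j * l] '' U j ∩ V j).Nonempty

/-- Δ-transitivity of an autonomous system `(X, g)`. -/
def ADSDeltaTransitive (g : X → X) : Prop :=
  ∀ m : ℕ, 1 ≤ m → ∃ Y : Set X, Dense Y ∧ IsGδ Y ∧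
    ∀ x ∈ Y, Dense {y : Fin m → X | ∃ n : ℕ, 1 ≤ n ∧ y = fun i => g^[(i.1 + 1) * n] x}

/-- Thickly syndetic transitivity of an autonomous system `(X, g)`. -/
def ADSThicklySyndeticallyTransitive (g : X → X) : Prop :=
  ∀ U V : Set X, IsOpen U → U.Nonempty → IsOpen V → V.Nonempty →
    ThicklySyndetic {n : ℕ | 1 ≤ n ∧ (g^[n] '' U ∩ V).Nonempty}

end Topo

section MetricDefs

variable [MetricSpace X]

/-- The compositions `f_r^k` converge collectively to the iterates `g^k`. -/
def CollectiveConvergence (f : ℕ → X → X) (g : X → X) : Prop :=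
  ∀ ε : ℝ, 0 < ε → ∃ r₀ : ℕ, ∀ r ≥ r₀, ∀ k : ℕ, 1 ≤ k → ∀ x : X,
    dist (nComp f r k x) (g^[k] x) < ε

/-- Chain mixing of an NDS. -/
def NDSChainMixing (f : ℕ → X → X) : Prop :=
  ∀ x y : X, ∀ δ : ℝ, 0 < δ → ∃ N : ℕ, 1 ≤ N ∧ ∀ n ≥ N,
    ∃ c : ℕ → X, c 0 = x ∧ c n = y ∧ ∀ i < n, dist (f i (c i)) (c (i + 1)) < δ

/-- Chain transitivity of an NDS. -/
def NDSChainTransitive (f : ℕ → X → X) : Prop :=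
  ∀ x y : X, ∀ δ : ℝ, 0 < δ → ∃ n : ℕ, 1 ≤ n ∧
    ∃ c : ℕ → X, c 0 = x ∧ c n = y ∧ ∀ i < n, dist (f i (c i)) (c (i + 1)) < δ

/-- The shadowing property of an NDS. -/
def NDSShadowing (f : ℕ → X → X) : Prop :=
  ∀ ε : ℝ, 0 < ε → ∃ δ : ℝ, 0 < δ ∧ ∀ n : ℕ, ∀ c : ℕ → X,
    (∀ i < n, dist (f i (c i)) (c (i + 1)) < δ) →
      ∃ z : X, ∀ i ≤ n, dist (nComp f 0 i z) (c i) < ε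

end MetricDefs

end NDSDefs
/-- Composites of consecutive blocks concatenate. -/
theorem nComp_add_aux {X : Type*} (f : ℕ → X → X) (i a b : ℕ) :
    nComp f i (a + b) = nComp f (i + a) b ∘ nComp f i a := by
  induction b with
  | zero => rfl
  | succ b ih =>
    rw [← Nat.add_assoc]
    simp only [nComp]
    rw [ih, Nat.add_assoc]
    rfl

/-- The `k`-fold composite of the `n`-th iterate is the `nk`-fold composite of `f`. -/
theorem nComp_iterNDS_aux {X : Type*} (f : ℕ → X → X) (n k : ℕ) :
    nComp (iterNDS f n) 0 k = nComp f 0 (n * k) := by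
  induction k with
  | zero => rfl
  | succ k ih =>
    rw [Nat.mul_succ, nComp_add_aux f 0 (n * k) n]
    simp only [nComp]
    rw [ih]
    simp only [iterNDS, Nat.zero_add]

/-- an NDS is multi-transitive iff its `n`-th iterate is multi-transitive. -/
theorem multiTransitive_iff_iterate {X : Type*} [MetricSpace X] [CompactSpace X]
    (f : ℕ → X → X) (hf : ∀ n, Continuous (f n)) (n : ℕ) (hn : 1 ≤ n) :
    MultiTransitive f ↔ MultiTransitive (iterNDS f n) := by
  constructor
  · intro h m hm U V hU hU' hV hV'
    have hlt : ∀ j : Fin (m * n), j.1 / n < m := fun j =>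
      (Nat.div_lt_iff_lt_mul hn).2 j.2
    obtain ⟨l, hl, H⟩ := h (m * n) (Nat.mul_pos hm hn)
      (fun j => U ⟨j.1 / n, hlt j⟩) (fun j => V ⟨j.1 / n, hlt j⟩)
      (fun _ => hU _) (fun _ => hU' _) (fun _ => hV _) (fun _ => hV' _)
    refine ⟨l, hl, fun i => ?_⟩
    have hj : n * i.1 + (n - 1) < m * n := by
      have h1 : n * (i.1 + 1) ≤ n * m := Nat.mul_le_mul_left n i.2
      rw [Nat.mul_succ] at h1
      rw [Nat.mul_comm m n]
      omega
    have hd : (n * i.1 + (n - 1)) / n = i.1 := by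
      rw [Nat.mul_add_div hn, Nat.div_eq_of_lt (by omega), Nat.add_zero]
    have hs : n * i.1 + (n - 1) + 1 = n * (i.1 + 1) := by
      rw [Nat.mul_succ]; omega
    have := H ⟨n * i.1 + (n - 1), hj⟩
    simp only [hd, hs] at this
    rw [nComp_iterNDS_aux, ← Nat.mul_assoc]
    exact this
  · intro h m hm U V hU hU' hV hV'
    obtain ⟨l, hl, H⟩ := h m hm U V hU hU' hV hV'
    refine ⟨n * l, Nat.mul_pos hn hl, fun i => ?_⟩
    have := H i
    rw [nComp_iterNDS_aux] at this
    rwa [Nat.mul_left_comm]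
end

section
/- Let (X, f_{1,∞}) be an NDS, r ∈ ℕ and a = (a_1,…,a_r) ∈ ℕ^r. Then (X, f_{1,∞}) is strongly multi-transitive if and only if the product NDS (X^r, f_{1,∞}^{[a]}) is strongly multi-transitive, where f_{1,∞}^{[a]} = f_{1,∞}^{[a_1]} × ⋯ × f_{1,∞}^{[a_r]} acts coordinatewise on X^r. -/
open Set Filter

theorem nComp_zero_add {X : Type*} (f : ℕ → X → X) (m k : ℕ) (x : X) :
    nComp f 0 (m + k) x = nComp f m k (nComp f 0 m x) := by
  induction k with
  | zero => rfl
  | succ k ih =>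
    rw [← Nat.add_assoc]
    simp only [nComp, Function.comp_apply, ih, Nat.zero_add]

theorem nComp_vecIter {X : Type*} (f : ℕ → X → X) {r : ℕ} (a : Fin r → ℕ) (n : ℕ)
    (x : Fin r → X) (i : Fin r) :
    nComp (vecIter f a) 0 n x i = nComp f 0 (a i * n) (x i) := by
  induction n with
  | zero => rfl
  | succ n ih =>
    rw [Nat.mul_succ, nComp_zero_add f, ← ih]
    simp only [nComp, Function.comp_apply, vecIter, iterNDS, Nat.zero_add]

theorem exists_box {X : Type*} [TopologicalSpace X] {r : ℕ} (W : Set (Fin r → X))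
    (hW : IsOpen W) (hne : W.Nonempty) :
    ∃ u : Fin r → Set X, (∀ i, IsOpen (u i)) ∧ (∀ i, (u i).Nonempty) ∧
      ∀ x : Fin r → X, (∀ i, x i ∈ u i) → x ∈ W := by
  obtain ⟨x, hx⟩ := hne
  obtain ⟨u, hu, hs⟩ := isOpen_pi_iff'.1 hW x hx
  exact ⟨u, fun i => (hu i).1, fun i => ⟨x i, (hu i).2⟩, fun y hy => hs fun i _ => hy i⟩

/-- an NDS is strongly multi-transitive iff the product NDS
`(X^r, f^{[a]})` is strongly multi-transitive. -/
theorem stronglyMultiTransitive_iff_vecIter {X : Type*} [MetricSpace X] [CompactSpace X]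
    (f : ℕ → X → X) (hf : ∀ n, Continuous (f n))
    (r : ℕ) (hr : 1 ≤ r) (a : Fin r → ℕ) (ha : ∀ i, 1 ≤ a i) :
    StronglyMultiTransitive f ↔ StronglyMultiTransitive (vecIter f a) := by
  constructor
  · intro h p hp b hb U V hU hUn hV hVn
    choose u hu hun hus using fun j => exists_box (U j) (hU j) (hUn j)
    choose v hv hvn hvs using fun j => exists_box (V j) (hV j) (hVn j)
    let e : Fin (p * r) ≃ Fin p × Fin r := finProdFinEquiv.symm
    obtain ⟨l, hl, H⟩ := h (p * r) (Nat.mul_pos hp hr)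
      (fun k => a (e k).2 * b (e k).1) (fun k => Nat.mul_pos (ha _) (hb _))
      (fun k => u (e k).1 (e k).2) (fun k => v (e k).1 (e k).2)
      (fun k => hu _ _) (fun k => hun _ _) (fun k => hv _ _) (fun k => hvn _ _)
    refine ⟨l, hl, fun j => ?_⟩
    have H' : ∀ i : Fin r, ∃ x ∈ u j i, nComp f 0 (a i * b j * l) x ∈ v j i := by
      intro i
      have := H (e.symm (j, i))
      simp only [Equiv.apply_symm_apply] at this
      obtain ⟨_, ⟨x, hx, rfl⟩, hy⟩ := this
      exact ⟨x, hx, hy⟩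
    choose x hx hy using H'
    refine ⟨_, ⟨x, hus j x hx, rfl⟩, hvs j _ fun i => ?_⟩
    rw [nComp_vecIter, ← Nat.mul_assoc]
    exact hy i
  · intro h p hp b hb U V hU hUn hV hVn
    let i₀ : Fin r := ⟨0, hr⟩
    obtain ⟨l, hl, H⟩ := h p hp b hb (fun j => {x | x i₀ ∈ U j}) (fun j => {x | x i₀ ∈ V j})
      (fun j => (hU j).preimage (continuous_apply i₀))
      (fun j => (hUn j).elim fun x hx => ⟨fun _ => x, hx⟩)
      (fun j => (hV j).preimage (continuous_apply i₀))
      (fun j => (hVn j).elim fun x hx => ⟨fun _ => x, hx⟩)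
    refine ⟨a i₀ * l, Nat.mul_pos (ha _) hl, fun j => ?_⟩
    obtain ⟨_, ⟨x, hx, rfl⟩, hy⟩ := H j
    refine ⟨_, ⟨x i₀, hx, rfl⟩, ?_⟩
    have hy' : nComp (vecIter f a) 0 (b j * l) x i₀ ∈ V j := hy
    rw [nComp_vecIter] at hy'
    rwa [Nat.mul_left_comm]
end

section
/- Let (X, f_{1,∞}) be an NDS. Then (X, f_{1,∞}) is strongly multi-transitive if and only if for every k ∈ ℕ the product NDS (X^k, f_{1,∞} × f_{1,∞}^{[2]} × ⋯ × f_{1,∞}^{[k]}) is weakly mixing of all orders. -/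
open Set Filter

theorem nds_nComp_add {X : Type*} (f : ℕ → X → X) (m n : ℕ) (x : X) :
    nComp f 0 (m + n) x = nComp f m n (nComp f 0 m x) := by
  induction n with
  | zero => rfl
  | succ n ih =>
    show f (0 + (m + n)) (nComp f 0 (m + n) x) = f (m + n) (nComp f m n (nComp f 0 m x))
    rw [ih, Nat.zero_add]

theorem nds_vecIter_nComp {X : Type*} (f : ℕ → X → X) {r : ℕ} (a : Fin r → ℕ) (m : ℕ)
    (x : Fin r → X) (i : Fin r) :
    nComp (vecIter f a) 0 m x i = nComp f 0 (a i * m) (x i) := by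
  induction m with
  | zero => rfl
  | succ m ih =>
    show nComp f (a i * (0 + m)) (a i) (nComp (vecIter f a) 0 m x i) = _
    rw [ih, Nat.mul_succ, nds_nComp_add, Nat.zero_add]

/-- an NDS is strongly multi-transitive iff for every `k`, the product NDS
`(X^k, f × f^{[2]} × ⋯ × f^{[k]})` is weakly mixing of all orders. -/
theorem stronglyMultiTransitive_iff_weaklyMixingAllOrders {X : Type*}
    [MetricSpace X] [CompactSpace X] (f : ℕ → X → X) (hf : ∀ n, Continuous (f n)) :
    StronglyMultiTransitive f ↔
      ∀ k : ℕ, 1 ≤ k → WeaklyMixingAllOrders (vecIter f (fun i : Fin k => i.1 + 1)) := by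
  constructor
  · intro h k hk n hn U V hU hUn hV hVn
    have box : ∀ W : Set (Fin k → X), IsOpen W → W.Nonempty → ∃ B : Fin k → Set X,
        (∀ i, IsOpen (B i)) ∧ (∀ i, (B i).Nonempty) ∧ Set.pi Set.univ B ⊆ W := by
      intro W hW ⟨x, hx⟩
      obtain ⟨u, hu, hs⟩ := isOpen_pi_iff'.1 hW x hx
      exact ⟨u, fun i => (hu i).1, fun i => ⟨x i, (hu i).2⟩, hs⟩
    choose BU hBUo hBUn hBU using fun j => box (U j) (hU j) (hUn j)
    choose BV hBVo hBVn hBV using fun j => box (V j) (hV j) (hVn j)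
    let e : Fin n × Fin k ≃ Fin (n * k) := finProdFinEquiv
    obtain ⟨l, hl, H⟩ := h (n * k) (Nat.mul_pos (by omega) hk)
      (fun q => (e.symm q).2.1 + 1) (fun q => Nat.le_add_left _ _)
      (fun q => BU (e.symm q).1 (e.symm q).2) (fun q => BV (e.symm q).1 (e.symm q).2)
      (fun q => hBUo _ _) (fun q => hBUn _ _) (fun q => hBVo _ _) (fun q => hBVn _ _)
    refine ⟨l, hl, fun j => ?_⟩
    have H' : ∀ i : Fin k, ∃ x, x ∈ BU j i ∧ nComp f 0 ((i.1 + 1) * l) x ∈ BV j i := by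
      intro i
      have := H (e (j, i))
      simp only [Equiv.symm_apply_apply] at this
      obtain ⟨_, ⟨x, hx, rfl⟩, hy⟩ := this
      exact ⟨x, hx, hy⟩
    choose x hx hy using H'
    refine ⟨_, ⟨x, hBU j (fun i _ => hx i), rfl⟩, hBV j (fun i _ => ?_)⟩
    rw [nds_vecIter_nComp]
    exact hy i
  · intro h p hp a ha U V hU hUn hV hVn
    let k := Finset.univ.sup a
    have hak : ∀ j, a j ≤ k := fun j => Finset.le_sup (Finset.mem_univ j)
    have hk : 1 ≤ k := (ha ⟨0, hp⟩).trans (hak _)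
    let c : Fin (p + 1) → Fin p := fun j => if hj : j.1 < p then ⟨j.1, hj⟩ else ⟨0, hp⟩
    let s : Fin p → Fin k := fun j => ⟨a j - 1, by have := ha j; have := hak j; omega⟩
    obtain ⟨l, hl, H⟩ := h k hk (p + 1) (by omega)
      (fun j => {x | x (s (c j)) ∈ U (c j)}) (fun j => {x | x (s (c j)) ∈ V (c j)})
      (fun j => (hU (c j)).preimage (continuous_apply (A := fun _ : Fin k => X) (s (c j))))
      (fun j => ⟨fun _ => (hUn (c j)).some, (hUn (c j)).some_mem⟩)
      (fun j => (hV (c j)).preimage (continuous_apply (A := fun _ : Fin k => X) (s (c j))))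
      (fun j => ⟨fun _ => (hVn (c j)).some, (hVn (c j)).some_mem⟩)
    refine ⟨l, hl, fun j => ?_⟩
    have hc : c j.castSucc = j := by simp [c]
    obtain ⟨_, ⟨x, hx, rfl⟩, hy⟩ := H j.castSucc
    simp only [hc, Set.mem_ofPred_eq] at hx hy
    rw [nds_vecIter_nComp] at hy
    have hs : (s j).1 + 1 = a j := Nat.sub_add_cancel (ha j)
    rw [hs] at hy
    exact ⟨_, ⟨_, hx, rfl⟩, hy⟩
end

section
/- Let (X, f_{1,∞}) be an NDS. If f_{1,∞} is strongly multi-transitive, then for every m ∈ ℕ, every vector a = (a_1,…,a_m) ∈ ℕ^m and every collection of nonempty open subsets U_1,…,U_m, V_1,…,V_m of X, the set {l ∈ ℕ : f_1^{l a_j}(U_j) ∩ V_j ≠ ∅ for all j = 1,…,m} is infinite. -/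
open Set Filter

/-- if an NDS is strongly multi-transitive, then the set of `l` with
`f₁^{l aⱼ}(Uⱼ) ∩ Vⱼ ≠ ∅` for all `j` is infinite. -/
theorem stronglyMultiTransitive_infinite_times {X : Type*} [MetricSpace X] [CompactSpace X]
    (f : ℕ → X → X) (hf : ∀ n, Continuous (f n))
    (h : StronglyMultiTransitive f)
    (m : ℕ) (hm : 1 ≤ m) (a : Fin m → ℕ) (ha : ∀ j, 1 ≤ a j)
    (U V : Fin m → Set X)
    (hU : ∀ j, IsOpen (U j)) (hUne : ∀ j, (U j).Nonempty)
    (hV : ∀ j, IsOpen (V j)) (hVne : ∀ j, (V j).Nonempty) :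
    {l : ℕ | 1 ≤ l ∧ ∀ j : Fin m, (nComp f 0 (l * a j) '' U j ∩ V j).Nonempty}.Infinite := by
  refine Set.infinite_of_forall_exists_gt fun n => ?_
  obtain ⟨l, hl, H⟩ := h m hm (fun j => a j * (n + 1))
    (fun j => Nat.mul_pos (ha j) (Nat.succ_pos n)) U V hU hUne hV hVne
  refine ⟨(n + 1) * l, ⟨Nat.mul_pos (Nat.succ_pos n) hl, fun j => ?_⟩, ?_⟩
  · have e : (n + 1) * l * a j = a j * (n + 1) * l := by ring
    rw [e]
    exact H j
  · nlinarith
end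

section
/- Let (X, f_{1,∞}) be an NDS, m ∈ ℕ and A ⊆ ℕ an infinite set. Then the following are equivalent: (1) for all nonempty open sets U_0, U_1, …, U_m ⊆ X there exists n ∈ A such that ⋂_{i=0}^{m} (f_1^{in})^{-1}(U_i) ≠ ∅; (2) there exists a dense Gδ set Y ⊆ X such that for every x ∈ Y the set {(f_1^n(x), f_1^{2n}(x), …, f_1^{mn}(x)) : n ∈ A} is dense in X^m. -/
open Set Filter

theorem nComp_continuous_aux {X : Type*} [TopologicalSpace X] (f : ℕ → X → X)
    (hf : ∀ n, Continuous (f n)) (i n : ℕ) : Continuous (nComp f i n) := by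
  induction n with
  | zero => exact continuous_id
  | succ k ih => exact (hf _).comp ih

/-- equivalence between the open-set condition along an infinite set `A`
and the existence of a dense Gδ set of points with dense Δ-orbits along `A`. -/
theorem delta_dense_Gdelta_iff {X : Type*} [MetricSpace X] [CompactSpace X]
    (f : ℕ → X → X) (hf : ∀ n, Continuous (f n))
    (m : ℕ) (hm : 1 ≤ m) (A : Set ℕ) (hA : A.Infinite) (hA0 : 0 ∉ A) :
    (∀ U : Fin (m + 1) → Set X, (∀ i, IsOpen (U i)) → (∀ i, (U i).Nonempty) →
        ∃ n ∈ A, (⋂ i : Fin (m + 1), nComp f 0 (i.1 * n) ⁻¹' U i).Nonempty) ↔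
      (∃ Y : Set X, Dense Y ∧ IsGδ Y ∧ ∀ x ∈ Y,
        Dense {y : Fin m → X | ∃ n ∈ A, y = fun i => nComp f 0 ((i.1 + 1) * n) x}) := by
  have hc : ∀ n, Continuous (nComp f 0 n) := fun n => nComp_continuous_aux f hf 0 n
  constructor
  · intro h
    let B := TopologicalSpace.countableBasis (Fin m → X)
    let W : Set (Fin m → X) → Set X := fun V =>
      ⋃ n ∈ A, (fun x => (fun i : Fin m => nComp f 0 ((i.1 + 1) * n) x)) ⁻¹' V
    have hW : ∀ V, IsOpen V → IsOpen (W V) := by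
      intro V hV
      refine isOpen_biUnion fun n _ => hV.preimage ?_
      exact continuous_pi fun i => hc _
    have hBc : B.Countable := TopologicalSpace.countable_countableBasis _
    have hBo : ∀ V ∈ B, IsOpen V := fun V hV => TopologicalSpace.isOpen_of_mem_countableBasis hV
    refine ⟨⋂ V ∈ B, W V, ?_, ?_, ?_⟩
    · refine dense_biInter_of_isOpen (fun V hV => hW V (hBo V hV)) hBc ?_
      intro V hV
      obtain ⟨y, hy⟩ := TopologicalSpace.nonempty_of_mem_countableBasis hV
      obtain ⟨u, hu, huV⟩ := isOpen_pi_iff'.1 (hBo V hV) y hy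
      rw [dense_iff_inter_open]
      intro U hU hUne
      obtain ⟨n, hn, x, hx⟩ := h (Fin.cons U u)
        (by intro i; refine Fin.cases ?_ ?_ i
            · simpa using hU
            · intro j; simpa using (hu j).1)
        (by intro i; refine Fin.cases ?_ ?_ i
            · simpa using hUne
            · intro j; simpa using ⟨y j, (hu j).2⟩)
      rw [mem_iInter] at hx
      refine ⟨x, ?_, mem_biUnion hn (huV ?_)⟩
      · have h0 := hx 0
        simpa [nComp] using h0
      · intro j _
        have h0 := hx j.succ
        simpa using h0
    · exact IsGδ.biInter_of_isOpen hBc fun V hV => hW V (hBo V hV)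
    · intro x hx
      rw [(TopologicalSpace.isBasis_countableBasis (Fin m → X)).dense_iff]
      intro V hV _
      have h1 := mem_iInter₂.1 hx V hV
      obtain ⟨n, hn, h2⟩ := mem_iUnion₂.1 h1
      exact ⟨_, h2, n, hn, rfl⟩
  · rintro ⟨Y, hYd, -, hY⟩ U hUo hUne
    obtain ⟨x, hxU, hxY⟩ := hYd.inter_open_nonempty (U 0) (hUo 0) (hUne 0)
    obtain ⟨y, hyV, n, hn, rfl⟩ := (hY x hxY).inter_open_nonempty
      (Set.pi univ fun j : Fin m => U j.succ)
      (isOpen_set_pi finite_univ fun j _ => hUo _)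
      (univ_pi_nonempty_iff.2 fun j => hUne _)
    refine ⟨n, hn, x, mem_iInter.2 fun i => ?_⟩
    refine Fin.cases ?_ ?_ i
    · simpa [nComp] using hxU
    · intro j
      simpa using hyV j (mem_univ _)
end

section
/- Let (X, f_{1,∞}) be a k-periodic NDS (i.e., f_{n+k} = f_n for every n ∈ ℕ) and let g = f_k ∘ f_{k-1} ∘ ⋯ ∘ f_1. Then the NDS (X, f_{1,∞}) is strongly multi-transitive if and only if the autonomous system (X, g) is strongly multi-transitive (i.e., for every m ∈ ℕ, every a = (a_1,…,a_m) ∈ ℕ^m and all nonempty open U_1,…,U_m, V_1,…,V_m ⊆ X there exists l ∈ ℕ with g^{a_j l}(U_j) ∩ V_j ≠ ∅ for every j). -/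
open Set Filter

theorem nComp_zero_mul_period {X : Type*} (f : ℕ → X → X) (k : ℕ)
    (hper : ∀ n : ℕ, f (n + k) = f n) (n : ℕ) :
    nComp f 0 (k * n) = (nComp f 0 k)^[n] := by
  have hmul : ∀ m j, f (k * m + j) = f j := by
    intro m j
    induction m with
    | zero => simp
    | succ m ih =>
      rw [show k * (m + 1) + j = k * m + j + k by ring, hper, ih]
  have hadd : ∀ m j, nComp f 0 (k * m + j) = nComp f 0 j ∘ nComp f 0 (k * m) := by
    intro m j
    induction j with
    | zero => rfl
    | succ j ih =>
      change f (0 + (k * m + j)) ∘ nComp f 0 (k * m + j)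
        = (f (0 + j) ∘ nComp f 0 j) ∘ nComp f 0 (k * m)
      rw [ih, zero_add, zero_add, hmul]
      rfl
  induction n with
  | zero => rfl
  | succ n ih =>
    rw [Function.iterate_succ', ← ih, Nat.mul_succ, hadd]

/-- a `k`-periodic NDS is strongly multi-transitive iff the autonomous
system given by `g = f_k ∘ ⋯ ∘ f_1` is strongly multi-transitive. -/
theorem periodic_stronglyMultiTransitive_iff {X : Type*} [MetricSpace X] [CompactSpace X]
    (f : ℕ → X → X) (hf : ∀ n, Continuous (f n))
    (k : ℕ) (hk : 1 ≤ k) (hper : ∀ n : ℕ, f (n + k) = f n) :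
    StronglyMultiTransitive f ↔ ADSStronglyMultiTransitive (nComp f 0 k) := by
  constructor
  · intro h m hm a ha U V hU hU' hV hV'
    obtain ⟨l, hl, H⟩ := h m hm (fun j => k * a j) (fun j => Nat.mul_pos hk (ha j))
      U V hU hU' hV hV'
    refine ⟨l, hl, fun j => ?_⟩
    have := H j
    rwa [mul_assoc, nComp_zero_mul_period f k hper] at this
  · intro h m hm a ha U V hU hU' hV hV'
    obtain ⟨l, hl, H⟩ := h m hm a ha U V hU hU' hV hV'
    refine ⟨k * l, Nat.mul_pos hk hl, fun j => ?_⟩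
    rw [mul_left_comm, nComp_zero_mul_period f k hper]
    exact H j
end

section
/- Let (X, f_{1,∞}) and (Y, g_{1,∞}) be NDS such that f_{1,∞} is topologically semi-conjugate to g_{1,∞} via a continuous surjection h : X → Y with g_n ∘ h = h ∘ f_n for every n ∈ ℕ. If f_{1,∞} is strongly multi-transitive, then g_{1,∞} is strongly multi-transitive. -/
open Set Filter

/-- strong multi-transitivity is preserved by topological semi-conjugacy. -/
theorem semiconj_stronglyMultiTransitive {X : Type*} [MetricSpace X] [CompactSpace X]
    {Y : Type*} [MetricSpace Y] [CompactSpace Y]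
    (f : ℕ → X → X) (hf : ∀ n, Continuous (f n))
    (g : ℕ → Y → Y) (hg : ∀ n, Continuous (g n))
    (h : X → Y) (hc : Continuous h) (hs : Function.Surjective h)
    (hsemi : ∀ n : ℕ, ∀ x : X, g n (h x) = h (f n x))
    (hfmt : StronglyMultiTransitive f) : StronglyMultiTransitive g := by
  have key : ∀ n x, nComp g 0 n (h x) = h (nComp f 0 n x) := by
    intro n x
    induction n with
    | zero => rfl
    | succ n ih => simp only [nComp, Function.comp_apply, ih, hsemi]
  intro p hp a ha U V hU hU' hV hV'
  obtain ⟨l, hl, H⟩ := hfmt p hp a ha (fun i => h ⁻¹' U i) (fun i => h ⁻¹' V i)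
    (fun i => (hU i).preimage hc) (fun i => (hU' i).preimage hs)
    (fun i => (hV i).preimage hc) (fun i => (hV' i).preimage hs)
  refine ⟨l, hl, fun i => ?_⟩
  obtain ⟨_, ⟨x, hx, rfl⟩, hy⟩ := H i
  exact ⟨_, ⟨h x, hx, key _ x⟩, hy⟩
end

section
/- Let (X, f_{1,∞}) be an NDS with f_{1,∞} feeble open and converging uniformly to a continuous map f : X → X, and suppose the compositions (f_r^k) converge collectively to the iterates (f^k). Then f_{1,∞} is thickly syndetically transitive if and only if f is thickly syndetically transitive (i.e., for all nonempty open U, V ⊆ X the set {n ∈ ℕ : f^n(U) ∩ V ≠ ∅} is thickly syndetic). -/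
open Set Filter

theorem nComp_add_aux_s13 {X : Type*} (f : ℕ → X → X) (r k : ℕ) (x : X) :
    nComp f 0 (r + k) x = nComp f r k (nComp f 0 r x) := by
  induction k with
  | zero => rfl
  | succ k ih =>
    show f (0 + (r + k)) (nComp f 0 (r + k) x) = f (r + k) (nComp f r k (nComp f 0 r x))
    rw [ih, Nat.zero_add]

theorem nComp_feeble_aux {X : Type*} [TopologicalSpace X] (f : ℕ → X → X)
    (hfo : FeebleOpen f) (i n : ℕ) (U : Set X) (hU : IsOpen U) (hne : U.Nonempty) :
    (interior (nComp f i n '' U)).Nonempty := by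
  induction n with
  | zero =>
    have h : nComp f i 0 '' U = U := Set.image_id U
    rw [h, hU.interior_eq]; exact hne
  | succ k ih =>
    refine (hfo (i + k) _ isOpen_interior ih).mono (interior_mono ?_)
    rintro _ ⟨y, hy, rfl⟩
    obtain ⟨x, hx, rfl⟩ := interior_subset hy
    exact ⟨x, hx, rfl⟩

/-- under feeble openness, uniform convergence and collective convergence,
an NDS is thickly syndetically transitive iff the limit map is. -/
theorem thicklySyndeticallyTransitive_iff_limit {X : Type*} [MetricSpace X] [CompactSpace X]
    (f : ℕ → X → X) (hf : ∀ n, Continuous (f n))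
    (flim : X → X) (hflim : Continuous flim)
    (hfo : FeebleOpen f)
    (hunif : TendstoUniformly f flim Filter.atTop)
    (hcoll : CollectiveConvergence f flim) :
    ThicklySyndeticallyTransitive f ↔ ADSThicklySyndeticallyTransitive flim := by
  constructor
  · intro h U V hU hUn hV hVn l
    obtain ⟨v, hv⟩ := hVn
    obtain ⟨ε, hε, hball⟩ := Metric.isOpen_iff.1 hV v hv
    obtain ⟨r₀, hr₀⟩ := hcoll (ε / 2) (half_pos hε)
    obtain ⟨r, hr, hrU⟩ : ∃ r ≥ r₀, (nComp f 0 r '' Set.univ ∩ U).Nonempty := by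
      obtain ⟨M, hM⟩ := h Set.univ U isOpen_univ ⟨v, trivial⟩ hU hUn 0
      obtain ⟨j, hj, h1, -⟩ := hM (r₀ + 1) (by omega)
      exact ⟨j, by omega, (hj 0 le_rfl).2⟩
    have hW : IsOpen (nComp f 0 r ⁻¹' U) := hU.preimage (nComp_continuous_aux f hf 0 r)
    have hWn : (nComp f 0 r ⁻¹' U).Nonempty := by
      obtain ⟨_, ⟨x, -, rfl⟩, hx⟩ := hrU
      exact ⟨x, hx⟩
    obtain ⟨M, hM⟩ := h _ (Metric.ball v (ε / 2)) hW hWn Metric.isOpen_ball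
      ⟨v, Metric.mem_ball_self (half_pos hε)⟩ l
    refine ⟨M, fun i hi => ?_⟩
    obtain ⟨j, hj, h1, h2⟩ := hM (r + i) (by omega)
    obtain ⟨m, rfl⟩ : ∃ m, j = r + m := ⟨j - r, by omega⟩
    refine ⟨m, fun t ht => ⟨by omega, ?_⟩, by omega, by omega⟩
    obtain ⟨-, _, ⟨x, hx, rfl⟩, hxv⟩ := hj t ht
    refine ⟨flim^[m + t] (nComp f 0 r x), ⟨_, hx, rfl⟩, hball ?_⟩
    rw [Nat.add_assoc, nComp_add_aux_s13, Metric.mem_ball] at hxv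
    have h3 := hr₀ r hr (m + t) (by omega) (nComp f 0 r x)
    rw [dist_comm] at h3
    rw [Metric.mem_ball]
    linarith [dist_triangle (flim^[m + t] (nComp f 0 r x))
      (nComp f r (m + t) (nComp f 0 r x)) v]
  · intro h U V hU hUn hV hVn l
    obtain ⟨v, hv⟩ := hVn
    obtain ⟨ε, hε, hball⟩ := Metric.isOpen_iff.1 hV v hv
    obtain ⟨r, hr₀⟩ := hcoll (ε / 2) (half_pos hε)
    obtain ⟨M, hM⟩ := h _ (Metric.ball v (ε / 2)) isOpen_interior
      (nComp_feeble_aux f hfo 0 r U hU hUn) Metric.isOpen_ball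
      ⟨v, Metric.mem_ball_self (half_pos hε)⟩ l
    refine ⟨M + r, fun i hi => ?_⟩
    obtain ⟨j, hj, h1, h2⟩ := hM i hi
    refine ⟨r + j, fun t ht => ⟨by omega, ?_⟩, by omega, by omega⟩
    obtain ⟨-, _, ⟨y, hy, rfl⟩, hyv⟩ := hj t ht
    obtain ⟨x, hx, rfl⟩ := interior_subset hy
    refine ⟨nComp f 0 (r + j + t) x, ⟨x, hx, rfl⟩, hball ?_⟩
    rw [Metric.mem_ball] at hyv
    rw [Nat.add_assoc, nComp_add_aux_s13, Metric.mem_ball]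
    have h3 := hr₀ r le_rfl (j + t) (by omega) (nComp f 0 r x)
    linarith [dist_triangle (nComp f r (j + t) (nComp f 0 r x))
      (flim^[j + t] (nComp f 0 r x)) v]
end

section
/- Let (X, f_{1,∞}) be an NDS such that the compositions (f_r^k) converge collectively to the iterates (f^k) of a continuous map f : X → X. If f_{1,∞} is feeble open and Δ-transitive, then f is Δ-transitive (i.e., for every m ∈ ℕ there exists a dense Gδ set Y ⊆ X such that for every x ∈ Y the set {(f^n(x), f^{2n}(x), …, f^{mn}(x)) : n ∈ ℕ} is dense in X^m). -/
open Set Filter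

theorem nComp_add_apply {X : Type*} (f : ℕ → X → X) (a b : ℕ) (x : X) :
    nComp f 0 (a + b) x = nComp f a b (nComp f 0 a x) := by
  induction b with
  | zero => rfl
  | succ b ih =>
    rw [← Nat.add_assoc]
    simp only [nComp, Function.comp_apply, ih, Nat.zero_add]

/-- In a nontrivial space, the hitting time of a box can be taken arbitrarily large. -/
theorem large_hit {X : Type*} [MetricSpace X] [Nontrivial X]
    (f : ℕ → X → X) (hdt : DeltaTransitive f) (k L : ℕ) (U : ℕ → Set X)
    (hU : ∀ i, IsOpen (U i)) (hUn : ∀ i, (U i).Nonempty) :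
    ∃ x : X, ∃ l : ℕ, 1 ≤ l ∧ L ≤ l ∧ ∀ i < k, nComp f 0 ((i + 1) * l) x ∈ U i := by
  obtain ⟨Y, hYd, -, hY⟩ := hdt (k + L + 1) (by omega)
  obtain ⟨x, hx⟩ := hYd.nonempty
  classical
  let W : Fin (k + L + 1) → Set X := fun i =>
    if i.1 < k then U i.1 else {nComp f 0 ((i.1 + 1) * (i.1 - k)) x}ᶜ
  have hWo : ∀ i, IsOpen (W i) := by
    intro i
    by_cases h : i.1 < k
    · simp only [W, h, if_true]; exact hU _
    · simp only [W, h, if_false]; exact isOpen_compl_singleton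
  have hWn : ∀ i, (W i).Nonempty := by
    intro i
    by_cases h : i.1 < k
    · simp only [W, h, if_true]; exact hUn _
    · simp only [W, h, if_false]
      obtain ⟨y, hy⟩ := exists_ne (nComp f 0 ((i.1 + 1) * (i.1 - k)) x)
      exact ⟨y, hy⟩
  choose w hw using hWn
  obtain ⟨y, hyW, n, hn, rfl⟩ := (hY x hx).inter_open_nonempty (Set.univ.pi W)
    (isOpen_set_pi Set.finite_univ fun i _ => hWo i) ⟨w, fun i _ => hw i⟩
  refine ⟨x, n, hn, ?_, ?_⟩
  · by_contra h
    have h1 := hyW ⟨k + n, by omega⟩ (Set.mem_univ _)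
    simp [W] at h1
  · intro i hi
    have h1 := hyW ⟨i, by omega⟩ (Set.mem_univ _)
    simpa [W, hi] using h1

theorem key_hit {X : Type*} [MetricSpace X] [Nontrivial X]
    (f : ℕ → X → X) (g : X → X) (hcoll : CollectiveConvergence f g)
    (hdt : DeltaTransitive f) (m : ℕ) (U : Set X) (hU : IsOpen U) (hUn : U.Nonempty)
    (V : Fin m → Set X) (hV : ∀ i, IsOpen (V i)) (hVn : ∀ i, (V i).Nonempty) :
    ∃ x ∈ U, ∃ n : ℕ, 1 ≤ n ∧ ∀ i : Fin m, g^[(i.1 + 1) * n] x ∈ V i := by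
  have h1 : ∀ i, ∃ W : Set X, ∃ R : ℕ, IsOpen W ∧ W.Nonempty ∧
      ∀ r ≥ R, ∀ k : ℕ, 1 ≤ k → ∀ x, nComp f r k x ∈ W → g^[k] x ∈ V i := by
    intro i
    obtain ⟨v, hv⟩ := hVn i
    obtain ⟨ε, hε, hb⟩ := Metric.isOpen_iff.1 (hV i) v hv
    obtain ⟨R, hR⟩ := hcoll (ε / 2) (half_pos hε)
    refine ⟨Metric.ball v (ε / 2), R, Metric.isOpen_ball, ⟨v, Metric.mem_ball_self (half_pos hε)⟩,
      fun r hr k hk x hx => hb ?_⟩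
    have h2 := hR r hr k hk x
    rw [Metric.mem_ball] at hx ⊢
    have h3 := dist_triangle (g^[k] x) (nComp f r k x) v
    rw [dist_comm] at h2
    linarith
  choose W R hWo hWn hW using h1
  classical
  let U' : ℕ → Set X := fun i => if i = 0 then U else
    if h : i - 1 < m then W ⟨i - 1, h⟩ else Set.univ
  obtain ⟨x, l, hl, hL, hx⟩ := large_hit f hdt (m + 1) (Finset.univ.sup R) U'
    (by intro i; simp only [U']; split_ifs; exacts [hU, hWo _, isOpen_univ])
    (by intro i; simp only [U']; split_ifs; exacts [hUn, hWn _, Set.univ_nonempty])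
  have h0 := hx 0 (by omega)
  simp only [U', if_true, Nat.zero_add, Nat.one_mul] at h0
  refine ⟨nComp f 0 l x, h0, l, hl, fun i => ?_⟩
  refine hW i l (le_trans (Finset.le_sup (Finset.mem_univ i)) hL) _ (Nat.mul_pos (by omega) hl) _ ?_
  rw [← nComp_add_apply]
  have h2 := hx (i.1 + 1) (by omega)
  have e : (i.1 + 1 + 1) * l = l + (i.1 + 1) * l := by ring
  rw [e] at h2
  simpa [U'] using h2

/-- under collective convergence, if the NDS is feeble open and
Δ-transitive then the limit map is Δ-transitive. -/
theorem deltaTransitive_limit {X : Type*} [MetricSpace X] [CompactSpace X]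
    (f : ℕ → X → X) (hf : ∀ n, Continuous (f n))
    (flim : X → X) (hflim : Continuous flim)
    (hcoll : CollectiveConvergence f flim)
    (hfo : FeebleOpen f)
    (hdt : DeltaTransitive f) : ADSDeltaTransitive flim := by
  intro m hm
  rcases subsingleton_or_nontrivial X with hs | hnt
  · refine ⟨Set.univ, dense_univ, IsGδ.univ, fun x _ y => subset_closure ?_⟩
    exact ⟨1, le_rfl, Subsingleton.elim _ _⟩
  · let T : ℕ → X → (Fin m → X) := fun n x i => flim^[(i.1 + 1) * n] x
    have hT : ∀ n, Continuous (T n) := fun n => continuous_pi fun i => hflim.iterate _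
    let B := TopologicalSpace.countableBasis (Fin m → X)
    have hB := TopologicalSpace.isBasis_countableBasis (Fin m → X)
    have hBc : B.Countable := TopologicalSpace.countable_countableBasis _
    let O : Set (Fin m → X) → Set X := fun b => ⋃ n : ℕ, ⋃ _ : 1 ≤ n, T n ⁻¹' b
    have hO : ∀ b ∈ B, IsOpen (O b) := fun b hb =>
      isOpen_iUnion fun n => isOpen_iUnion fun _ => (hB.isOpen hb).preimage (hT n)
    refine ⟨⋂ b ∈ B, O b, dense_biInter_of_isOpen hO hBc ?_,
      IsGδ.biInter hBc fun b hb => (hO b hb).isGδ, ?_⟩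
    · intro b hb
      rw [dense_iff_inter_open]
      intro U hU hUn
      obtain ⟨v, hv⟩ := TopologicalSpace.nonempty_of_mem_countableBasis hb
      obtain ⟨I, V, hV, hVb⟩ := isOpen_pi_iff.1 (hB.isOpen hb) v hv
      classical
      obtain ⟨x, hxU, n, hn, hx⟩ := key_hit f flim hcoll hdt m U hU hUn
        (fun i => if i ∈ I then V i else Set.univ)
        (by intro i; split_ifs with h; exacts [(hV i h).1, isOpen_univ])
        (by intro i; split_ifs with h; exacts [⟨_, (hV i h).2⟩, Set.univ_nonempty])
      refine ⟨x, hxU, Set.mem_iUnion₂.2 ⟨n, hn, hVb fun i hi => ?_⟩⟩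
      have h1 := hx i
      rwa [if_pos (Finset.mem_coe.1 hi)] at h1
    · intro x hx
      rw [hB.dense_iff]
      intro b hb _
      obtain ⟨n, hn, h⟩ := Set.mem_iUnion₂.1 (Set.mem_iInter₂.1 hx b hb)
      exact ⟨T n x, h, n, hn, rfl⟩
end

section
/- Let (X, f_{1,∞}) be an NDS. If f_{1,∞} is chain transitive and has the shadowing property, then f_{1,∞} is transitive. -/
open Set Filter

/-- a chain transitive NDS with the shadowing property is transitive. -/
theorem chainTransitive_shadowing_transitive {X : Type*} [MetricSpace X] [CompactSpace X]
    (f : ℕ → X → X) (hf : ∀ n, Continuous (f n))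
    (hct : NDSChainTransitive f) (hsh : NDSShadowing f) : NDSTransitive f := by
  intro U V hU hUne hV hVne
  obtain ⟨x, hx⟩ := hUne
  obtain ⟨y, hy⟩ := hVne
  obtain ⟨ε₁, h1, hb1⟩ := Metric.isOpen_iff.1 hU x hx
  obtain ⟨ε₂, h2, hb2⟩ := Metric.isOpen_iff.1 hV y hy
  obtain ⟨δ, hδ, hs⟩ := hsh (min ε₁ ε₂) (lt_min h1 h2)
  obtain ⟨n, hn, c, hc0, hcn, hc⟩ := hct x y δ hδ
  obtain ⟨z, hz⟩ := hs n c hc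
  refine ⟨n, hn, nComp f 0 n z, ⟨z, hb1 ?_, rfl⟩, hb2 ?_⟩
  · have h := hz 0 (Nat.zero_le n)
    rw [hc0] at h
    exact lt_of_lt_of_le h (min_le_left _ _)
  · have h := hz n le_rfl
    rw [hcn] at h
    exact lt_of_lt_of_le h (min_le_right _ _)
end
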